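/- Variance bound (eqs. (70)–(72)): For every integer N_t ≥ 2 and every real B ≥ 0, setting n = 2^B, B̄ = B/N_t, and s = 1/(N_t − 1), the quantity var[ν] := n·Beta(n, 1 + 2s) − n²·Beta(n, 1 + s)² satisfies var[ν] ≤ 2^{−2B̄(1 + s)}·( Γ(1 + 2s) − Γ(1 + s)²·(1 + 1/n)^{−2s} ). -/

import Mathlib

/-- The Euler Beta function `Beta(x,y) = ∫₀¹ t^{x-1} (1-t)^{y-1} dt`. -/
noncomputable def Beta (x y : ℝ) : ℝ := ∫ t in (0:ℝ)..1, t ^ (x - 1) * (1 - t) ^ (y - 1)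

/-! For an integer `n`, `n * Beta n (1 + t)` is the `t`-th moment of the minimum of `n` independent
uniform variables on `[0, 1]`, so the quantity to bound is the variance of the `s`-th power of that
minimum. Writing this moment as `Γ(1 + t) * (Γ(n + 1) / Γ(n + 1 + t))`, the log-convexity of `Γ`
together with `Γ(x + 1) = x * Γ(x)` bounds the Gamma ratio above by `n ^ (-t)` for `t ≥ 0` and below
by `(n + 1) ^ (-t)` for `0 ≤ t ≤ 1`. The upper bound at `t = 2 * s` controls the second moment, the
lower bound at `t = s` the first. -/

section

open Real

variable {x s t : ℝ}

lemma log_Gamma_add_one (hx : 0 < x) : log (Gamma (x + 1)) = log (Gamma x) + log x := by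
  rw [Gamma_add_one hx.ne', log_mul hx.ne' (Gamma_pos_of_pos hx).ne', add_comm]

lemma rpow_mul_Gamma_add_one_le (hx : 0 < x) (ht : 0 ≤ t) :
    x ^ t * Gamma (x + 1) ≤ Gamma (x + 1 + t) := by
  obtain rfl | ht := ht.eq_or_lt
  · simp
  have slope_le : log x ≤ (log (Gamma (x + 1 + t)) - log (Gamma (x + 1))) / t := by
    have h := convexOn_log_Gamma.slope_mono_adjacent (x := x) (y := x + 1) (z := x + 1 + t)
      (Set.mem_Ioi.2 hx) (Set.mem_Ioi.2 (by positivity)) (by linarith) (by linarith)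
    simpa [log_Gamma_add_one hx] using h
  have hΓ : 0 < Gamma (x + 1) := Gamma_pos_of_pos (by positivity)
  rw [← log_le_log_iff (by positivity) (Gamma_pos_of_pos (by positivity)),
    log_mul (by positivity) hΓ.ne', log_rpow hx]
  rw [le_div_iff₀ ht] at slope_le
  linarith

lemma Gamma_add_le_rpow_mul_Gamma (hx : 0 < x) (hs : 0 ≤ s) (hs1 : s ≤ 1) :
    Gamma (x + s) ≤ x ^ s * Gamma x := by
  have log_le : log (Gamma (x + s)) ≤ (1 - s) * log (Gamma x) + s * log (Gamma (x + 1)) := by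
    have h := convexOn_log_Gamma.2 (Set.mem_Ioi.2 hx) (Set.mem_Ioi.2 (add_pos hx one_pos))
      (sub_nonneg.2 hs1) hs (sub_add_cancel 1 s)
    have h_comb : (1 - s) * x + s * (x + 1) = x + s := by ring
    simpa only [Function.comp_apply, smul_eq_mul, h_comb] using h
  have hΓ : 0 < Gamma x := Gamma_pos_of_pos hx
  rw [← log_le_log_iff (Gamma_pos_of_pos (by positivity)) (by positivity),
    log_mul (by positivity) hΓ.ne', log_rpow hx]
  rw [log_Gamma_add_one hx] at log_le
  linarith

lemma Gamma_add_one_div_Gamma_le_rpow_neg (hx : 0 < x) (ht : 0 ≤ t) :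
    Gamma (x + 1) / Gamma (x + 1 + t) ≤ x ^ (-t) := by
  rw [rpow_neg hx.le, ← one_div,
    div_le_div_iff₀ (Gamma_pos_of_pos (by positivity)) (by positivity), one_mul, mul_comm]
  exact rpow_mul_Gamma_add_one_le hx ht

lemma rpow_neg_le_Gamma_div_Gamma (hx : 0 < x) (hs : 0 ≤ s) (hs1 : s ≤ 1) :
    x ^ (-s) ≤ Gamma x / Gamma (x + s) := by
  rw [rpow_neg hx.le, ← one_div,
    div_le_div_iff₀ (by positivity) (Gamma_pos_of_pos (by positivity)), one_mul, mul_comm]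
  exact Gamma_add_le_rpow_mul_Gamma hx hs hs1

lemma ofReal_Beta (x y : ℝ) : (Beta x y : ℂ) = Complex.betaIntegral x y := by
  rw [Beta, Complex.betaIntegral, ← intervalIntegral.integral_ofReal]
  refine intervalIntegral.integral_congr fun t ht ↦ ?_
  rw [Set.uIcc_of_le zero_le_one] at ht
  simp [Complex.ofReal_cpow ht.1, Complex.ofReal_cpow (sub_nonneg.2 ht.2)]

lemma Beta_eq_Gamma_mul_Gamma_div {y : ℝ} (hx : 0 < x) (hy : 0 < y) :
    Beta x y = Gamma x * Gamma y / Gamma (x + y) := by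
  rw [← Complex.ofReal_re (Beta x y), ofReal_Beta,
    ← ProbabilityTheory.beta_eq_betaIntegralReal x y hx hy, ProbabilityTheory.beta]

lemma mul_Beta_one_add (hx : 0 < x) (ht : -1 < t) :
    x * Beta x (1 + t) = Gamma (1 + t) * (Gamma (x + 1) / Gamma (x + 1 + t)) := by
  rw [Beta_eq_Gamma_mul_Gamma_div hx (by linarith), Gamma_add_one hx.ne', ← add_assoc]
  ring

lemma mul_Beta_one_add_le (hx : 0 < x) (ht : 0 ≤ t) :
    x * Beta x (1 + t) ≤ Gamma (1 + t) * x ^ (-t) := by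
  rw [mul_Beta_one_add hx (by linarith)]
  exact mul_le_mul_of_nonneg_left (Gamma_add_one_div_Gamma_le_rpow_neg hx ht)
    (Gamma_nonneg_of_nonneg (by positivity))

lemma le_mul_Beta_one_add (hx : 0 < x) (hs : 0 ≤ s) (hs1 : s ≤ 1) :
    Gamma (1 + s) * (x + 1) ^ (-s) ≤ x * Beta x (1 + s) := by
  rw [mul_Beta_one_add hx (by linarith)]
  exact mul_le_mul_of_nonneg_left (rpow_neg_le_Gamma_div_Gamma (by positivity) hs hs1)
    (Gamma_nonneg_of_nonneg (by positivity))

lemma rpow_neg_mul_one_add_one_div_rpow_neg (hx : 0 < x) (t : ℝ) :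
    x ^ (-t) * (1 + 1 / x) ^ (-t) = (x + 1) ^ (-t) := by
  rw [← mul_rpow hx.le (by positivity), mul_add, mul_one, mul_one_div_cancel hx.ne']

theorem rvq_variance_bound_general {n : ℝ} (hn : 0 < n) (hs : 0 ≤ s) (hs1 : s ≤ 1) :
    n * Beta n (1 + 2 * s) - n ^ 2 * Beta n (1 + s) ^ 2 ≤
      n ^ (-(2 * s)) * (Gamma (1 + 2 * s) - Gamma (1 + s) ^ 2 * (1 + 1 / n) ^ (-(2 * s))) := by
  have second_moment_le : n * Beta n (1 + 2 * s) ≤ Gamma (1 + 2 * s) * n ^ (-(2 * s)) :=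
    mul_Beta_one_add_le hn (by positivity)
  have sq_le_sq_first_moment :
      (Gamma (1 + s) * (n + 1) ^ (-s)) ^ 2 ≤ (n * Beta n (1 + s)) ^ 2 :=
    pow_le_pow_left₀ (mul_nonneg (Gamma_nonneg_of_nonneg (by positivity)) (by positivity))
      (le_mul_Beta_one_add hn hs hs1) 2
  have sq_rpow : ((n + 1) ^ (-s)) ^ 2 = (n + 1) ^ (-(2 * s)) := by
    rw [← rpow_mul_natCast (by positivity)]
    ring_nf
  calc n * Beta n (1 + 2 * s) - n ^ 2 * Beta n (1 + s) ^ 2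
      = n * Beta n (1 + 2 * s) - (n * Beta n (1 + s)) ^ 2 := by rw [mul_pow]
    _ ≤ Gamma (1 + 2 * s) * n ^ (-(2 * s)) - (Gamma (1 + s) * (n + 1) ^ (-s)) ^ 2 :=
        sub_le_sub second_moment_le sq_le_sq_first_moment
    _ = _ := by
        rw [mul_pow, sq_rpow, ← rpow_neg_mul_one_add_one_div_rpow_neg hn]
        ring

lemma rpow_neg_two_mul_div_mul {a N : ℝ} (ha : 0 ≤ a) (hN0 : N ≠ 0) (hN1 : N - 1 ≠ 0) (B : ℝ) :
    a ^ (-(2 * (B / N) * (1 + 1 / (N - 1)))) = (a ^ B) ^ (-(2 * (1 / (N - 1)))) := by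
  rw [← rpow_mul ha]
  congr 1
  field_simp
  ring

end

/-- Variance bound (eqs. (70)–(72)): for every integer `N_t ≥ 2` and every real `B ≥ 0`,
setting `n = 2^B`, `B̄ = B/N_t`, `s = 1/(N_t−1)`,
`var[ν] = n·Beta(n, 1+2s) − n²·Beta(n, 1+s)²` satisfies
`var[ν] ≤ 2^{−2B̄(1+s)}·(Γ(1+2s) − Γ(1+s)²·(1 + 1/n)^{−2s})`. -/
theorem rvq_variance_bound (Nt : ℕ) (hNt : 2 ≤ Nt) (B : ℝ) (hB : 0 ≤ B) :
    (2:ℝ) ^ B * Beta ((2:ℝ) ^ B) (1 + 2 * (1 / ((Nt : ℝ) - 1))) -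
        ((2:ℝ) ^ B) ^ 2 * (Beta ((2:ℝ) ^ B) (1 + 1 / ((Nt : ℝ) - 1))) ^ 2 ≤
      (2:ℝ) ^ (-(2 * (B / (Nt : ℝ)) * (1 + 1 / ((Nt : ℝ) - 1)))) *
        (Real.Gamma (1 + 2 * (1 / ((Nt : ℝ) - 1))) -
          (Real.Gamma (1 + 1 / ((Nt : ℝ) - 1))) ^ 2 *
            (1 + 1 / (2:ℝ) ^ B) ^ (-(2 * (1 / ((Nt : ℝ) - 1))))) := by
  have hNt' : (2 : ℝ) ≤ Nt := mod_cast hNt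
  rw [rpow_neg_two_mul_div_mul two_pos.le (by linarith) (by linarith)]
  exact rvq_variance_bound_general (by positivity) (one_div_nonneg.2 (by linarith))
    (div_le_one_of_le₀ (by linarith) (by linarith))
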